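/- Let θ ∈ (0, π/2), let N := (0, …, 0, 1 − cos θ) ∈ C_θ be the top point of the cap, and define d(ξ) := d_N(ξ)²/(2θ), where d_N(ξ) is the geodesic distance from ξ to N on C_θ. Then d is smooth on C_θ, d = θ/2 and ∇d = μ on ∂C_θ, and the Hessian bound ∇²d ≥ min{1/θ, cot θ}·σ holds on all of C_θ. -/

import Mathlib

/- Formalization of statements from "The L_p dual Minkowski problem for capillary
hypersurfaces".

We work in the ambient space `ℝ^{n+1}`.  The spherical cap `C_θ` is the part of the unit
sphere centred at `cos θ • e` (where `e = -E_{n+1}`) lying in the closed upper half-space.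
Functions on `C_θ` are represented by ambient functions `h : Euc n → ℝ`; the intrinsic
(round-metric) gradient `∇h` and Hessian `∇²h` of the restriction of `h` to `C_θ` are
expressed through ambient derivatives (for tangential arguments these expressions depend
only on the restriction of `h` to the cap).  The quantity `det(∇²h + hσ)` is encoded as the
determinant of the endomorphism of `ℝ^{n+1}` acting as `∇²h + hσ` on the tangent space of
the cap and as the identity on the normal line. -/

open Real Set
open scoped RealInnerProductSpace

noncomputable section

/-- Ambient Euclidean space `ℝ^{n+1}`. -/
abbrev Euc (n : ℕ) : Type := EuclideanSpace ℝ (Fin (n + 1))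

/-- The unit vector `e = -E_{n+1}`. -/
def eVec (n : ℕ) : Euc n := -(EuclideanSpace.single (Fin.last n) (1 : ℝ))

/-- `ν(ξ) = ξ - cos θ • e`, the unit normal (at `ξ`) of the sphere containing the cap `C_θ`. -/
def sphNormal (n : ℕ) (θ : ℝ) (ξ : Euc n) : Euc n := ξ - Real.cos θ • eVec n

/-- The spherical cap `C_θ = {ξ ∈ closure ℝ^{n+1}_+ : |ξ - cos θ • e| = 1}`. -/
def cap (n : ℕ) (θ : ℝ) : Set (Euc n) :=
  {ξ | 0 ≤ ξ (Fin.last n) ∧ ‖sphNormal n θ ξ‖ = 1}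

/-- The boundary `∂C_θ`. -/
def capBdry (n : ℕ) (θ : ℝ) : Set (Euc n) :=
  {ξ | ξ (Fin.last n) = 0 ∧ ‖sphNormal n θ ξ‖ = 1}

/-- The outward unit conormal `μ` of `∂C_θ` in `C_θ` (at boundary points). -/
def conormal (n : ℕ) (θ : ℝ) (ξ : Euc n) : Euc n :=
  Real.cot θ • ξ + Real.sin θ • eVec n

/-- Orthogonal projection of `ℝ^{n+1}` onto the tangent space of the cap at `ξ`. -/
def tproj (n : ℕ) (θ : ℝ) (ξ : Euc n) : Euc n →L[ℝ] Euc n :=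
  ContinuousLinearMap.id ℝ (Euc n) - (innerSL ℝ (sphNormal n θ ξ)).smulRight (sphNormal n θ ξ)

/-- `X` is tangent to the cap at `ξ`. -/
def IsTangent (n : ℕ) (θ : ℝ) (ξ X : Euc n) : Prop :=
  ⟪X, sphNormal n θ ξ⟫ = 0

/-- Intrinsic (round-metric) gradient `∇h` of `h` on the cap. -/
def sgrad (n : ℕ) (θ : ℝ) (h : Euc n → ℝ) (ξ : Euc n) : Euc n :=
  tproj n θ ξ (gradient h ξ)

/-- Intrinsic (round-metric) Hessian `∇²h(X,Y)` of `h` on the cap (tangential arguments). -/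
def shess (n : ℕ) (θ : ℝ) (h : Euc n → ℝ) (ξ X Y : Euc n) : ℝ :=
  ⟪(fderiv ℝ (gradient h) ξ) X, Y⟫ - ⟪gradient h ξ, sphNormal n θ ξ⟫ * ⟪X, Y⟫

/-- Endomorphism representing the intrinsic Hessian `∇²h` on tangent vectors
(and vanishing on the normal line). -/
def thessOp (n : ℕ) (θ : ℝ) (h : Euc n → ℝ) (ξ : Euc n) : Euc n →L[ℝ] Euc n :=
  ((tproj n θ ξ).comp ((fderiv ℝ (gradient h) ξ).comp (tproj n θ ξ)))
    - ⟪gradient h ξ, sphNormal n θ ξ⟫ • tproj n θ ξ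

/-- Rank-one projection onto the normal direction at `ξ`. -/
def normalPart (n : ℕ) (θ : ℝ) (ξ : Euc n) : Euc n →L[ℝ] Euc n :=
  (innerSL ℝ (sphNormal n θ ξ)).smulRight (sphNormal n θ ξ)

/-- Endomorphism acting as `∇²h + hσ` on the tangent space and as the identity on the
normal line. -/
def hessOp (n : ℕ) (θ : ℝ) (h : Euc n → ℝ) (ξ : Euc n) : Euc n →L[ℝ] Euc n :=
  thessOp n θ h ξ + h ξ • tproj n θ ξ + normalPart n θ ξ

/-- `det(∇²h + hσ)` at `ξ`. -/
def sdet (n : ℕ) (θ : ℝ) (h : Euc n → ℝ) (ξ : Euc n) : ℝ :=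
  LinearMap.det (hessOp n θ h ξ).toLinearMap

/-- `h > 0` on the cap. -/
def PosOnCap (n : ℕ) (θ : ℝ) (h : Euc n → ℝ) : Prop := ∀ ξ ∈ cap n θ, 0 < h ξ

/-- Convexity of a solution: `∇²h + hσ > 0` on the cap. -/
def IsConvexSol (n : ℕ) (θ : ℝ) (h : Euc n → ℝ) : Prop :=
  ∀ ξ ∈ cap n θ, ∀ X : Euc n, IsTangent n θ ξ X → X ≠ 0 →
    0 < shess n θ h ξ X X + h ξ * ⟪X, X⟫

/-- The right-hand side `f·h^{p-1}·(h² + |∇h|²)^{(n+1-q)/2}`. -/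
def eqRHS (n : ℕ) (θ p q : ℝ) (f h : Euc n → ℝ) (ξ : Euc n) : ℝ :=
  f ξ * h ξ ^ (p - 1) * (h ξ ^ 2 + ‖sgrad n θ h ξ‖ ^ 2) ^ (((n : ℝ) + 1 - q) / 2)

/-- `h` solves `det(∇²h + hσ) = f·h^{p-1}(h² + |∇h|²)^{(n+1-q)/2}` in `C_θ`. -/
def SolvesEq (n : ℕ) (θ p q : ℝ) (f h : Euc n → ℝ) : Prop :=
  ∀ ξ ∈ cap n θ, sdet n θ h ξ = eqRHS n θ p q f h ξ

/-- Robin boundary condition `∇_μ h = cot θ · h` on `∂C_θ`. -/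
def RobinBC (n : ℕ) (θ : ℝ) (h : Euc n → ℝ) : Prop :=
  ∀ ξ ∈ capBdry n θ, ⟪sgrad n θ h ξ, conormal n θ ξ⟫ = Real.cot θ * h ξ

/-- `l(ξ) = sin²θ + cos θ·⟨ξ, e⟩`. -/
def lFun (n : ℕ) (θ : ℝ) (ξ : Euc n) : ℝ :=
  Real.sin θ ^ 2 + Real.cos θ * ⟪ξ, eVec n⟫

/-- `‖f‖_{C⁰(C_θ)} ≤ K`. -/
def CZeroNormLe (n : ℕ) (θ : ℝ) (f : Euc n → ℝ) (K : ℝ) : Prop :=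
  ∀ ξ ∈ cap n θ, |f ξ| ≤ K

/-- `‖f‖_{C¹(C_θ)} ≤ K`. -/
def COneNormLe (n : ℕ) (θ : ℝ) (f : Euc n → ℝ) (K : ℝ) : Prop :=
  CZeroNormLe n θ f K ∧ ∀ ξ ∈ cap n θ, ‖sgrad n θ f ξ‖ ≤ K

/-- `‖f‖_{C²(C_θ)} ≤ K`. -/
def CTwoNormLe (n : ℕ) (θ : ℝ) (f : Euc n → ℝ) (K : ℝ) : Prop :=
  COneNormLe n θ f K ∧
    ∀ ξ ∈ cap n θ, ∀ X Y : Euc n, IsTangent n θ ξ X → IsTangent n θ ξ Y →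
      |shess n θ f ξ X Y| ≤ K * ‖X‖ * ‖Y‖

/-- The linearized operator `L_h(γ)` of the equation `𝒢(∇²h,h) = 𝒥₁(∇h,h)` at `h`:
the derivative at `ε = 0` of `𝒢 - 𝒥₁` along the variation `h_ε = h·e^{εγ}`
(cf. equation (5.4) of the paper, which is exactly this derivative). -/
def linOp (n : ℕ) (θ p q : ℝ) (f h γ : Euc n → ℝ) (ξ : Euc n) : ℝ :=
  deriv (fun ε : ℝ =>
    sdet n θ (fun x => h x * Real.exp (ε * γ x)) ξ
      - eqRHS n θ p q f (fun x => h x * Real.exp (ε * γ x)) ξ) 0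

/-- Endomorphism acting as `l·∇²u + cos θ·(∇u ⊗ e^T + e^T ⊗ ∇u) + uσ` on the tangent space
and as the identity on the normal line. -/
def capillaryOp (n : ℕ) (θ : ℝ) (u : Euc n → ℝ) (ξ : Euc n) : Euc n →L[ℝ] Euc n :=
  lFun n θ ξ • thessOp n θ u ξ
    + Real.cos θ • ((innerSL ℝ (sgrad n θ u ξ)).smulRight (tproj n θ ξ (eVec n))
        + (innerSL ℝ (tproj n θ ξ (eVec n))).smulRight (sgrad n θ u ξ))
    + u ξ • tproj n θ ξ + normalPart n θ ξ

/-- Endomorphism acting as `∇²v + ∇v ⊗ ∇v + σ` on the tangent space and as the identity on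
the normal line. -/
def logOp (n : ℕ) (θ : ℝ) (v : Euc n → ℝ) (ξ : Euc n) : Euc n →L[ℝ] Euc n :=
  thessOp n θ v ξ + (innerSL ℝ (sgrad n θ v ξ)).smulRight (sgrad n θ v ξ)
    + tproj n θ ξ + normalPart n θ ξ

/-- Geodesic distance on `C_θ` from `ξ` to the top point `N = (0,…,0,1-cos θ)`
(for `θ ∈ (0,π/2)` the cap is geodesically convex, so this is `arccos ⟨ν(ξ), ν(N)⟩`). -/
def distToTop (n : ℕ) (θ : ℝ) (ξ : Euc n) : ℝ :=
  Real.arccos (ξ (Fin.last n) + Real.cos θ)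

/-- The function `d := d_N²/(2θ)`. -/
def dCap (n : ℕ) (θ : ℝ) (ξ : Euc n) : ℝ := distToTop n θ ξ ^ 2 / (2 * θ)

/-! The square of the distance `r` to the top point is a smooth function of `cos r`, even at
`r = 0`, because `arcsin ^ 2` is even and analytic; as `cos r` is an affine function of the height,
`dCap` is the restriction of `φ (cos r)` for a smooth `φ`. Along great circles through interior
points the restriction of a function to the cap determines its tangential first and second
derivatives, and by continuity this persists on the boundary, so only that representative has to
be examined. Its Hessian is `φ'' (cos r) • dh ⊗ dh - φ' (cos r) * cos r • σ`, where `h` is the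
height. Here `φ'' (cos r) ≥ 0` because `r * cos r ≤ sin r`, and
`-φ' (cos r) * cos r = r * cot r / θ ≥ cot θ` because `r * cot r` is decreasing. -/

open Filter Topology
open scoped Manifold ContDiff

section LocalToGlobal

variable {𝕜 E F : Type*} [NontriviallyNormedField 𝕜] [NormedAddCommGroup F]

theorem iteratedDeriv_eq_of_eventuallyEq_nhdsWithin [NormedSpace 𝕜 F] {f g : 𝕜 → F} {s : Set 𝕜}
    {x : 𝕜} {k : ℕ} (hs : UniqueDiffOn 𝕜 s) (hx : x ∈ s) (hf : ContDiffAt 𝕜 k f x)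
    (hg : ContDiffAt 𝕜 k g x) (hfg : f =ᶠ[𝓝[s] x] g) :
    iteratedDeriv k f x = iteratedDeriv k g x := by
  rw [← iteratedDerivWithin_eq_iteratedDeriv hs hf hx,
    ← iteratedDerivWithin_eq_iteratedDeriv hs hg hx]
  exact hfg.iteratedDerivWithin_eq (hfg.eq_of_nhdsWithin hx)

theorem exists_contDiff_eqOn_of_forall_exists [NormedAddCommGroup E] [NormedSpace ℝ E]
    [FiniteDimensional ℝ E] [NormedSpace ℝ F] {n : ℕ∞} {f : E → F} {s : Set E} (hs : IsClosed s)
    (hf : ∀ x ∈ s, ∃ g, (∀ᶠ y in 𝓝 x, ContDiffAt ℝ n g y) ∧ g =ᶠ[𝓝[s] x] f) :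
    ∃ g, ContDiff ℝ n g ∧ EqOn g f s := by
  classical
  let t (x : E) : Set F := if x ∈ s then {f x} else univ
  have ht (x) : Convex ℝ (t x) := by
    by_cases hx : x ∈ s
    · simp [t, hx]
    · simp [t, hx, convex_univ]
  obtain ⟨g, hg⟩ := exists_contMDiffMap_forall_mem_convex_of_local 𝓘(ℝ, E) (n := n) ht fun x => by
    by_cases hx : x ∈ s
    · obtain ⟨g, hg, hgf⟩ := hf x hx
      refine ⟨_, hg.and (eventually_nhdsWithin_iff.1 hgf), g,
        contMDiffOn_iff_contDiffOn.2 fun y hy => hy.1.contDiffWithinAt, fun y hy => ?_⟩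
      by_cases hys : y ∈ s
      · simpa [t, hys] using hy.2 hys
      · simp [t, hys]
    · refine ⟨sᶜ, hs.isOpen_compl.mem_nhds hx, 0, contMDiffOn_const, fun y hy => ?_⟩
      simp [t, show y ∉ s from hy]
  exact ⟨g, g.contMDiff.contDiff, fun x hx => by simpa [t, hx] using hg x⟩

end LocalToGlobal

section EvenAnalytic

variable {𝕜 E : Type*} [NontriviallyNormedField 𝕜] [NormedAddCommGroup E]
  [NormedSpace 𝕜 E]

/-- The power series in `y = x ^ 2` formed by the even-degree coefficients of `p`. -/
def evenCoeffSeries (p : FormalMultilinearSeries 𝕜 𝕜 E) : FormalMultilinearSeries 𝕜 𝕜 E :=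
  fun n => ContinuousMultilinearMap.mkPiRing 𝕜 (Fin n) (p.coeff (2 * n))

theorem coeff_evenCoeffSeries (p : FormalMultilinearSeries 𝕜 𝕜 E) (n : ℕ) :
    (evenCoeffSeries p).coeff n = p.coeff (2 * n) := by
  simp [FormalMultilinearSeries.coeff.eq_def, evenCoeffSeries,
    - FormalMultilinearSeries.apply_eq_prod_smul_coeff]

theorem norm_evenCoeffSeries (p : FormalMultilinearSeries 𝕜 𝕜 E) (n : ℕ) :
    ‖evenCoeffSeries p n‖ = ‖p (2 * n)‖ := by
  simp only [FormalMultilinearSeries.norm_apply_eq_norm_coef, coeff_evenCoeffSeries]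

theorem radius_evenCoeffSeries_pos {p : FormalMultilinearSeries 𝕜 𝕜 E} (hp : 0 < p.radius) :
    0 < (evenCoeffSeries p).radius := by
  obtain ⟨C, r, -, hr, hC⟩ := p.le_mul_pow_of_radius_pos hp
  lift r to NNReal using hr.le
  have hr' : 0 < r := hr
  refine lt_of_lt_of_le (b := (((r ^ 2)⁻¹ : NNReal) : ENNReal)) (by positivity)
    ((evenCoeffSeries p).le_radius_of_bound C fun n => ?_)
  rw [norm_evenCoeffSeries, NNReal.coe_inv, NNReal.coe_pow, inv_pow, ← div_eq_mul_inv,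
    div_le_iff₀ (by positivity), ← pow_mul]
  exact hC (2 * n)

variable [NeZero (2 : 𝕜)]

theorem hasSum_evenCoeff_of_even {a : ℕ → E} {x : 𝕜} {y : E}
    (hpos : HasSum (fun n => x ^ n • a n) y) (hneg : HasSum (fun n => (-x) ^ n • a n) y) :
    HasSum (fun n => (x ^ 2) ^ n • a (2 * n)) y := by
  have hsum := (hpos.add hneg).const_smul (2 : 𝕜)⁻¹
  rw [← two_smul 𝕜 y, inv_smul_smul₀ two_ne_zero] at hsum
  have hzero : ∀ n ∉ range (2 * ·), (2 : 𝕜)⁻¹ • (x ^ n • a n + (-x) ^ n • a n) = 0 := by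
    intro n hn
    have hodd : Odd n := by
      simpa [← Nat.not_even_iff_odd, even_iff_exists_two_mul, eq_comm] using hn
    simp [hodd.neg_pow]
  refine (((mul_right_injective₀ two_ne_zero).hasSum_iff hzero).2 hsum).congr_fun ?_
  intro n
  simp only [Function.comp_apply, (even_two_mul n).neg_pow, ← two_smul 𝕜, pow_mul,
    inv_smul_smul₀ (two_ne_zero (α := 𝕜))]

theorem exists_analyticAt_comp_sq_eventuallyEq_of_even [CompleteSpace E] {f : 𝕜 → E}
    (hf : AnalyticAt 𝕜 f 0) (heven : f.Even) :
    ∃ g, AnalyticAt 𝕜 g 0 ∧ (fun x => g (x ^ 2)) =ᶠ[𝓝 0] f := by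
  obtain ⟨p, hp⟩ := hf
  have hseries := hasFPowerSeriesAt_iff.1 hp
  simp only [zero_add] at hseries
  have hq := ((evenCoeffSeries p).hasFPowerSeriesOnBall
    (radius_evenCoeffSeries_pos hp.radius_pos)).hasFPowerSeriesAt
  refine ⟨_, hq.analyticAt, ?_⟩
  have hq' := hasFPowerSeriesAt_iff.1 hq
  simp only [zero_add, coeff_evenCoeffSeries] at hq'
  have hsq : Tendsto (fun x : 𝕜 => x ^ 2) (𝓝 0) (𝓝 0) := (continuous_pow 2).tendsto' 0 0 (by simp)
  have hneg : Tendsto (fun x : 𝕜 => -x) (𝓝 0) (𝓝 0) := continuous_neg.tendsto' 0 0 neg_zero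
  filter_upwards [hseries, hneg.eventually hseries, hsq.eventually hq'] with x hx hnx hqx
  exact hqx.unique (hasSum_evenCoeff_of_even hx (heven x ▸ hnx))

end EvenAnalytic

section CosProfile

theorem exists_analyticAt_arccos_sq :
    ∃ g : ℝ → ℝ, AnalyticAt ℝ g 1 ∧ g =ᶠ[𝓝[≤] 1] fun t => arccos t ^ 2 := by
  have harcsin : AnalyticAt ℝ (fun x => arcsin x ^ 2) 0 :=
    (contDiffAt_arcsin (by simp) (by simp)).analyticAt.pow 2
  obtain ⟨g, hg, hgF⟩ := exists_analyticAt_comp_sq_eventuallyEq_of_even harcsin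
    fun x => by rw [arcsin_neg, neg_sq]
  have hhalf : Tendsto (fun t => sin (arccos t / 2)) (𝓝[≤] 1) (𝓝 0) :=
    ((continuous_sin.comp (continuous_arccos.div_const 2)).tendsto' 1 0 (by simp)).mono_left
      nhdsWithin_le_nhds
  have hlb : ∀ᶠ t : ℝ in 𝓝[≤] 1, -1 < t :=
    nhdsWithin_le_nhds (lt_mem_nhds (by norm_num))
  -- `g` is evaluated at `sin (arccos t / 2) ^ 2`, where it takes the value `(arccos t / 2) ^ 2`.
  refine ⟨fun t => 4 * g ((1 - t) / 2), ?_, ?_⟩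
  · have haff : AnalyticAt ℝ (fun t : ℝ => (1 - t) / 2) 1 := by fun_prop
    exact analyticAt_const.mul (hg.comp_of_eq haff (by norm_num))
  · filter_upwards [hhalf.eventually hgF, hlb, self_mem_nhdsWithin] with t hg ht ht1
    have hsq : sin (arccos t / 2) ^ 2 = (1 - t) / 2 := by
      rw [sin_sq_eq_half_sub, mul_div_cancel₀ _ two_ne_zero, cos_arccos ht.le ht1]; ring
    rw [hsq, arcsin_sin (by linarith [arccos_nonneg t, pi_pos])
      (by linarith [arccos_le_pi t])] at hg
    rw [hg]; ring

theorem exists_contDiff_eqOn_arccos_sq {c : ℝ} (hc : -1 < c) :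
    ∃ F : ℝ → ℝ, ContDiff ℝ ∞ F ∧ EqOn F (fun t => arccos t ^ 2) (Icc c 1) := by
  refine exists_contDiff_eqOn_of_forall_exists isClosed_Icc fun t ht => ?_
  rcases ht.2.lt_or_eq with ht1 | rfl
  · refine ⟨fun t => arccos t ^ 2, ?_, .rfl⟩
    filter_upwards [Ioo_mem_nhds (hc.trans_le ht.1) ht1] with u hu
    exact (contDiffAt_arccos hu.1.ne' hu.2.ne).pow 2
  · obtain ⟨g, hg, hgF⟩ := exists_analyticAt_arccos_sq
    exact ⟨g, hg.eventually_analyticAt.mono fun u hu => hu.contDiffAt,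
      hgF.filter_mono (nhdsWithin_mono 1 Icc_subset_Iic_self)⟩

theorem exists_contDiff_comp_cos_eqOn_sq {θ : ℝ} (hθ : θ ∈ Ico 0 π) :
    ∃ F : ℝ → ℝ, ContDiff ℝ ∞ F ∧ EqOn (fun r => F (cos r)) (fun r => r ^ 2) (Icc 0 θ) := by
  have hcos : -1 < cos θ := cos_pi ▸ cos_lt_cos_of_nonneg_of_le_pi hθ.1 le_rfl hθ.2
  obtain ⟨F, hF, hFeq⟩ := exists_contDiff_eqOn_arccos_sq hcos
  refine ⟨F, hF, fun r hr => ?_⟩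
  have hmem : cos r ∈ Icc (cos θ) 1 :=
    ⟨cos_le_cos_of_nonneg_of_le_pi hr.1 hθ.2.le hr.2, cos_le_one r⟩
  simpa [arccos_cos hr.1 (hr.2.trans hθ.2.le)] using hFeq hmem

theorem iteratedDeriv_two_comp_cos {φ : ℝ → ℝ} (hφ : ContDiff ℝ 2 φ) (r : ℝ) :
    iteratedDeriv 2 (fun r => φ (cos r)) r =
      deriv (deriv φ) (cos r) * sin r ^ 2 - deriv φ (cos r) * cos r := by
  have hφ' := hφ.differentiable_deriv_two
  have hderiv : deriv (fun r => φ (cos r)) = fun r => deriv φ (cos r) * -sin r := funext fun r =>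
    ((hφ.differentiable two_ne_zero (cos r)).hasDerivAt.comp r (hasDerivAt_cos r)).deriv
  have hderiv₂ := ((hφ' (cos r)).hasDerivAt.comp r (hasDerivAt_cos r)).mul (hasDerivAt_sin r).neg
  rw [iteratedDeriv_succ, iteratedDeriv_one, hderiv]
  refine hderiv₂.deriv.trans ?_
  simp only [Function.comp_apply, Pi.neg_apply]
  ring

theorem antitoneOn_mul_cot : AntitoneOn (fun x => x * cot x) (Ioo 0 π) := by
  have hderiv : ∀ x ∈ Ioo 0 π,
      HasDerivAt (fun x => x * cot x) ((sin x * cos x - x) / sin x ^ 2) x := by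
    intro x hx
    have hsin : sin x ≠ 0 := (sin_pos_of_mem_Ioo hx).ne'
    have h := (hasDerivAt_id x).mul ((hasDerivAt_cos x).div (hasDerivAt_sin x) hsin)
    simp only [cot_eq_cos_div_sin]
    refine h.congr_deriv ?_
    simp only [id_eq, Pi.div_apply]
    field_simp
    linear_combination -x * sin_sq_add_cos_sq x
  refine antitoneOn_of_deriv_nonpos (convex_Ioo 0 π)
    (fun x hx => (hderiv x hx).continuousAt.continuousWithinAt)
    (fun x hx => (hderiv x (interior_subset hx)).differentiableAt.differentiableWithinAt)
    fun x hx => ?_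
  rw [(hderiv x (interior_subset hx)).deriv]
  have hsin := sin_le (show 0 ≤ 2 * x by linarith [(interior_subset hx).1])
  rw [sin_two_mul] at hsin
  exact div_nonpos_of_nonpos_of_nonneg (by linarith) (sq_nonneg _)

theorem mul_cos_le_sin {x : ℝ} (hx : x ∈ Icc 0 π) : x * cos x ≤ sin x := by
  rcases lt_or_ge x (π / 2) with hlt | hge
  · have hcos : 0 < cos x := cos_pos_of_mem_Ioo ⟨by linarith [hx.1, pi_pos], hlt⟩
    simpa [tan_eq_sin_div_cos, le_div_iff₀ hcos] using le_tan hx.1 hlt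
  · exact (mul_nonpos_of_nonneg_of_nonpos hx.1
      (cos_nonpos_of_pi_div_two_le_of_le hge (by linarith [hx.2, pi_pos]))).trans
      (sin_nonneg_of_mem_Icc hx)

/-- `φ` is a profile for `dCap n θ`: at distance `r` from the top point, `dCap n θ` takes the value
`φ (cos r)`. -/
def IsCapProfile (θ : ℝ) (φ : ℝ → ℝ) : Prop :=
  EqOn (fun r => φ (cos r)) (fun r => r ^ 2 / (2 * θ)) (Icc 0 θ)

theorem exists_contDiff_isCapProfile {θ : ℝ} (hθ : θ ∈ Ico 0 π) :
    ∃ φ : ℝ → ℝ, ContDiff ℝ ∞ φ ∧ IsCapProfile θ φ := by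
  obtain ⟨F, hF, hFcos⟩ := exists_contDiff_comp_cos_eqOn_sq hθ
  exact ⟨fun t => F t / (2 * θ), hF.div_const _, fun r hr => congrArg (· / (2 * θ)) (hFcos hr)⟩

variable {θ r : ℝ} {φ : ℝ → ℝ}

theorem IsCapProfile.neg_deriv_cos_mul_sin (hprof : IsCapProfile θ φ) (hθ : 0 < θ)
    (hφ : Differentiable ℝ φ) (hr : r ∈ Icc 0 θ) : -deriv φ (cos r) * sin r = r / θ := by
  have hL := ((hφ (cos r)).hasDerivAt.comp r (hasDerivAt_cos r)).hasDerivWithinAt (s := Icc 0 θ)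
  have hR := ((hasDerivAt_pow 2 r).div_const (2 * θ)).hasDerivWithinAt (s := Icc 0 θ)
  have hLR := (uniqueDiffOn_Icc hθ r hr).eq_deriv _ (hL.congr hprof.symm (hprof.symm hr)) hR
  rw [neg_mul_comm, hLR]
  push_cast
  field_simp

theorem IsCapProfile.deriv_deriv_cos_mul_sin_sq (hprof : IsCapProfile θ φ) (hθ : 0 < θ)
    (hφ : ContDiff ℝ 2 φ) (hr : r ∈ Icc 0 θ) :
    deriv (deriv φ) (cos r) * sin r ^ 2 = 1 / θ + deriv φ (cos r) * cos r := by
  have hsq : iteratedDeriv 2 (fun r : ℝ => r ^ 2 / (2 * θ)) r = 1 / θ := by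
    simp [div_mul_cancel_left₀]
  have hjet : iteratedDeriv 2 (fun r => φ (cos r)) r =
      iteratedDeriv 2 (fun r : ℝ => r ^ 2 / (2 * θ)) r :=
    iteratedDeriv_eq_of_eventuallyEq_nhdsWithin (uniqueDiffOn_Icc hθ) hr
      (hφ.comp contDiff_cos).contDiffAt (by fun_prop)
      (hprof.eventuallyEq_of_mem self_mem_nhdsWithin)
  rw [← hsq, ← hjet, iteratedDeriv_two_comp_cos hφ r, sub_add_cancel]

theorem IsCapProfile.cot_le_neg_deriv_cos_mul_cos (hprof : IsCapProfile θ φ) (hθ : θ ∈ Ioo 0 π)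
    (hφ : ContDiff ℝ 2 φ) (hr : r ∈ Icc 0 θ) : cot θ ≤ -deriv φ (cos r) * cos r := by
  have hsinθ := sin_pos_of_mem_Ioo hθ
  rcases hr.1.eq_or_lt with rfl | hr0
  · have h := hprof.deriv_deriv_cos_mul_sin_sq hθ.1 hφ hr
    have hle : cot θ ≤ 1 / θ := by
      rw [cot_eq_cos_div_sin, div_le_div_iff₀ hsinθ hθ.1]
      linarith [mul_cos_le_sin (Ioo_subset_Icc_self hθ)]
    simp only [sin_zero] at h
    linarith
  · have hrπ : r ∈ Ioo 0 π := ⟨hr0, hr.2.trans_lt hθ.2⟩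
    have hsin := sin_pos_of_mem_Ioo hrπ
    have h := hprof.neg_deriv_cos_mul_sin hθ.1 (hφ.differentiable two_ne_zero) hr
    calc cot θ = θ * cot θ / θ := by rw [mul_div_cancel_left₀ _ hθ.1.ne']
      _ ≤ r * cot r / θ := div_le_div_of_nonneg_right (antitoneOn_mul_cot hrπ hθ hr.2) hθ.1.le
      _ = -deriv φ (cos r) * cos r := by
        rw [mul_div_right_comm, ← h, cot_eq_cos_div_sin]
        field_simp

theorem IsCapProfile.deriv_deriv_cos_nonneg (hprof : IsCapProfile θ φ) (hθ : θ ∈ Ioo 0 π)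
    (hφ : ContDiff ℝ 2 φ) (hr : r ∈ Icc 0 θ) : 0 ≤ deriv (deriv φ) (cos r) := by
  have hcont : Continuous (deriv (deriv φ)) :=
    ((contDiff_succ_iff_deriv (n := 1)).1 hφ).2.2.continuous_deriv le_rfl
  have hclosed : IsClosed {r | 0 ≤ deriv (deriv φ) (cos r)} :=
    isClosed_le continuous_const (hcont.comp continuous_cos)
  -- The differential equation for `φ` degenerates at the top point `r = 0`.
  suffices h : Ioc 0 θ ⊆ {r | 0 ≤ deriv (deriv φ) (cos r)} by
    rw [← closure_Ioc hθ.1.ne] at hr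
    exact closure_minimal h hclosed hr
  intro r hr
  have hrπ : r ∈ Ioo 0 π := ⟨hr.1, hr.2.trans_lt hθ.2⟩
  have hsin := sin_pos_of_mem_Ioo hrπ
  have hfirst := hprof.neg_deriv_cos_mul_sin hθ.1 (hφ.differentiable two_ne_zero)
    (Ioc_subset_Icc_self hr)
  have hsecond := hprof.deriv_deriv_cos_mul_sin_sq hθ.1 hφ (Ioc_subset_Icc_self hr)
  have hcube : deriv (deriv φ) (cos r) * sin r ^ 3 = (sin r - r * cos r) / θ := by
    linear_combination sin r * hsecond - cos r * hfirst
  refine nonneg_of_mul_nonneg_left (b := sin r ^ 3) ?_ (by positivity)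
  rw [hcube]
  exact div_nonneg (sub_nonneg.2 (mul_cos_le_sin (Ioo_subset_Icc_self hrπ))) hθ.1.le

end CosProfile

section GreatCircle

variable {E : Type*} [NormedAddCommGroup E] [InnerProductSpace ℝ E]

/-- The great circle `t ↦ c + cos t • v + sin t • w` on the unit sphere centred at `c`, through
`c + v` with initial velocity `w`, where `v` and `w` are meant to be orthonormal. -/
def greatCircle (c v w : E) (t : ℝ) : E := c + (cos t • v + sin t • w)

variable {c v w : E} {f : E → ℝ}

theorem norm_greatCircle_sub_center (hv : ‖v‖ = 1) (hw : ‖w‖ = 1) (hvw : ⟪v, w⟫ = 0) (t : ℝ) :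
    ‖greatCircle c v w t - c‖ = 1 := by
  rw [greatCircle, add_sub_cancel_left, ← sq_eq_sq₀ (norm_nonneg _) zero_le_one, norm_add_sq_real,
    inner_smul_left, inner_smul_right, hvw, norm_smul, norm_smul, hv, hw]
  simp

theorem hasDerivAt_greatCircle (c v w : E) (t : ℝ) :
    HasDerivAt (greatCircle c v w) (cos t • w - sin t • v) t := by
  have h := ((hasDerivAt_cos t).smul_const v).add ((hasDerivAt_sin t).smul_const w)
  exact (h.const_add c).congr_deriv (by module)

theorem greatCircle_zero (c v w : E) : greatCircle c v w 0 = c + v := by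
  simp [greatCircle]

variable [CompleteSpace E]

theorem contDiff_gradient {n : WithTop ℕ∞} (hf : ContDiff ℝ (n + 1) f) :
    ContDiff ℝ n (gradient f) :=
  (InnerProductSpace.toDual ℝ E).symm.contDiff.comp (hf.fderiv_right le_rfl)

theorem deriv_comp_greatCircle (hf : Differentiable ℝ f) (t : ℝ) :
    deriv (fun t => f (greatCircle c v w t)) t =
      ⟪gradient f (greatCircle c v w t), cos t • w - sin t • v⟫ := by
  rw [inner_gradient_left]
  exact ((hf _).hasFDerivAt.comp_hasDerivAt t (hasDerivAt_greatCircle c v w t)).deriv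

theorem iteratedDeriv_two_comp_greatCircle_zero (hf : ContDiff ℝ 2 f) :
    iteratedDeriv 2 (fun t => f (greatCircle c v w t)) 0 =
      ⟪fderiv ℝ (gradient f) (c + v) w, w⟫ - ⟪gradient f (c + v), v⟫ := by
  have hgrad : Differentiable ℝ (gradient f) :=
    (contDiff_gradient (n := 1) (by simpa [one_add_one_eq_two])).differentiable one_ne_zero
  have hpath := (hgrad _).hasFDerivAt.comp_hasDerivAt 0 (hasDerivAt_greatCircle c v w 0)
  have hvel := ((hasDerivAt_cos 0).smul_const w).sub ((hasDerivAt_sin 0).smul_const v)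
  rw [iteratedDeriv_succ, iteratedDeriv_one,
    funext (deriv_comp_greatCircle (hf.differentiable two_ne_zero))]
  refine (hpath.inner ℝ hvel).deriv.trans ?_
  simp only [Function.comp_apply, Pi.sub_apply, greatCircle_zero, cos_zero, sin_zero, neg_zero,
    zero_smul, one_smul, sub_zero, zero_sub, inner_neg_right]
  ring

theorem gradient_comp_inner_add_const {φ : ℝ → ℝ} (hφ : Differentiable ℝ φ) (w : E) (b : ℝ)
    (x : E) :
    gradient (fun x => φ (⟪w, x⟫ + b)) x = deriv φ (⟪w, x⟫ + b) • w := by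
  have hinner : HasFDerivAt (fun x => ⟪w, x⟫ + b) (innerSL ℝ w) x :=
    (innerSL ℝ w).hasFDerivAt.add_const b
  refine HasGradientAt.gradient (hasGradientAt_iff_hasFDerivAt.2 ?_)
  refine ((hφ _).hasDerivAt.comp_hasFDerivAt x hinner).congr_fderiv ?_
  ext y
  simp

theorem fderiv_gradient_comp_inner_add_const {φ : ℝ → ℝ} (hφ : ContDiff ℝ 2 φ) (w : E) (b : ℝ)
    (x y : E) :
    fderiv ℝ (gradient fun x => φ (⟪w, x⟫ + b)) x y =
      (deriv (deriv φ) (⟪w, x⟫ + b) * ⟪w, y⟫) • w := by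
  have hinner : HasFDerivAt (fun x => ⟪w, x⟫ + b) (innerSL ℝ w) x :=
    (innerSL ℝ w).hasFDerivAt.add_const b
  rw [funext (gradient_comp_inner_add_const (hφ.differentiable two_ne_zero) w b)]
  have h := ((hφ.differentiable_deriv_two _).hasDerivAt.comp_hasFDerivAt x hinner).smul_const w
  simpa using DFunLike.congr_fun h.fderiv y

end GreatCircle

section Cap

variable {n : ℕ} {θ : ℝ} {ξ X Y : Euc n}

theorem inner_neg_eVec (X : Euc n) : ⟪-eVec n, X⟫ = X (Fin.last n) := by
  simp [eVec, EuclideanSpace.inner_single_left]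

theorem norm_eVec : ‖eVec n‖ = 1 := by simp [eVec]

theorem inner_neg_eVec_sphNormal : ⟪-eVec n, sphNormal n θ ξ⟫ = ξ (Fin.last n) + cos θ := by
  rw [inner_neg_eVec]
  simp [sphNormal, eVec]

theorem center_add_sphNormal : cos θ • eVec n + sphNormal n θ ξ = ξ := by
  rw [sphNormal, add_sub_cancel]

theorem last_add_cos_mem_Icc (hξ : ξ ∈ cap n θ) : ξ (Fin.last n) + cos θ ∈ Icc (cos θ) 1 := by
  refine ⟨le_add_of_nonneg_left hξ.1, ?_⟩
  rw [← inner_neg_eVec_sphNormal]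
  refine (real_inner_le_norm _ _).trans ?_
  rw [norm_neg, norm_eVec, hξ.2, one_mul]

theorem cos_distToTop (hξ : ξ ∈ cap n θ) : cos (distToTop n θ ξ) = ξ (Fin.last n) + cos θ :=
  have h := last_add_cos_mem_Icc hξ
  cos_arccos ((neg_one_le_cos θ).trans h.1) h.2

theorem distToTop_mem_Icc (hθ : θ ∈ Icc 0 π) (hξ : ξ ∈ cap n θ) : distToTop n θ ξ ∈ Icc 0 θ := by
  refine ⟨arccos_nonneg _, ?_⟩
  exact (arccos_le_arccos (last_add_cos_mem_Icc hξ).1).trans_eq (arccos_cos hθ.1 hθ.2)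

theorem distToTop_eq_of_mem_capBdry (hθ : θ ∈ Icc 0 π) (hξ : ξ ∈ capBdry n θ) :
    distToTop n θ ξ = θ := by
  rw [distToTop, hξ.1, zero_add, arccos_cos hθ.1 hθ.2]

theorem capBdry_subset_cap : capBdry n θ ⊆ cap n θ := fun _ hξ => ⟨hξ.1.ge, hξ.2⟩

theorem IsTangent.smul (hX : IsTangent n θ ξ X) (c : ℝ) : IsTangent n θ ξ (c • X) := by
  rw [IsTangent, real_inner_smul_left, hX, mul_zero]

theorem IsTangent.exists_eq_smul_norm_eq_one (hX : IsTangent n θ ξ X) (hX₀ : X ≠ 0) :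
    ∃ (c : ℝ) (Y : Euc n), X = c • Y ∧ ‖Y‖ = 1 ∧ IsTangent n θ ξ Y :=
  ⟨‖X‖, ‖X‖⁻¹ • X, (smul_inv_smul₀ (norm_ne_zero_iff.2 hX₀) X).symm,
    norm_smul_inv_norm hX₀, hX.smul _⟩

theorem tproj_apply : tproj n θ ξ X = X - ⟪sphNormal n θ ξ, X⟫ • sphNormal n θ ξ := by
  simp [tproj]

theorem tproj_eq_self (hX : IsTangent n θ ξ X) : tproj n θ ξ X = X := by
  rw [tproj_apply, real_inner_comm, hX, zero_smul, sub_zero]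

theorem isTangent_tproj (hξ : ‖sphNormal n θ ξ‖ = 1) : IsTangent n θ ξ (tproj n θ ξ X) := by
  rw [IsTangent, tproj_apply, inner_sub_left, inner_smul_left, real_inner_self_eq_norm_sq, hξ,
    real_inner_comm]
  simp

theorem inner_tproj_left : ⟪tproj n θ ξ X, Y⟫ = ⟪X, tproj n θ ξ Y⟫ := by
  simp only [tproj_apply, inner_sub_left, inner_sub_right, inner_smul_left, inner_smul_right,
    real_inner_comm X, conj_trivial]
  ring

theorem continuous_sphNormal : Continuous (sphNormal n θ) := continuous_id.sub continuous_const

theorem continuous_tproj_apply {f : Euc n → Euc n} (hf : Continuous f) :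
    Continuous fun ξ => tproj n θ ξ (f ξ) := by
  have := continuous_sphNormal (n := n) (θ := θ)
  simp only [tproj_apply]
  fun_prop

theorem sphNormal_greatCircle (t : ℝ) :
    sphNormal n θ (greatCircle (cos θ • eVec n) (sphNormal n θ ξ) X t) =
      cos t • sphNormal n θ ξ + sin t • X := by
  rw [sphNormal, greatCircle, add_sub_cancel_left]

theorem last_greatCircle (t : ℝ) :
    greatCircle (cos θ • eVec n) (sphNormal n θ ξ) X t (Fin.last n) =
      cos t * (ξ (Fin.last n) + cos θ) + sin t * X (Fin.last n) - cos θ := by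
  rw [eq_sub_iff_add_eq, ← inner_neg_eVec_sphNormal, ← inner_neg_eVec_sphNormal (θ := θ),
    ← inner_neg_eVec X, sphNormal_greatCircle, inner_add_right, inner_smul_right, inner_smul_right]

theorem norm_sphNormal_greatCircle (hξ : ‖sphNormal n θ ξ‖ = 1) (hX : ‖X‖ = 1)
    (hXt : IsTangent n θ ξ X) (t : ℝ) :
    ‖sphNormal n θ (greatCircle (cos θ • eVec n) (sphNormal n θ ξ) X t)‖ = 1 :=
  norm_greatCircle_sub_center hξ hX ((real_inner_comm _ _).trans hXt) t

theorem norm_tproj_sq (hξ : ‖sphNormal n θ ξ‖ = 1) :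
    ‖tproj n θ ξ X‖ ^ 2 = ‖X‖ ^ 2 - ⟪sphNormal n θ ξ, X⟫ ^ 2 := by
  rw [← real_inner_self_eq_norm_sq, inner_tproj_left, tproj_eq_self (isTangent_tproj hξ),
    tproj_apply, inner_sub_right, inner_smul_right, real_inner_self_eq_norm_sq,
    real_inner_comm (sphNormal n θ ξ) X, sq ⟪_, _⟫]

theorem exists_isTangent_last_eq_sin (hθ : θ ∈ Ioo 0 π) (hξ : ξ ∈ capBdry n θ) :
    ∃ X, ‖X‖ = 1 ∧ IsTangent n θ ξ X ∧ X (Fin.last n) = sin θ := by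
  have hsin := sin_pos_of_mem_Ioo hθ
  have hnorm : ‖tproj n θ ξ (-eVec n)‖ ^ 2 = sin θ ^ 2 := by
    rw [norm_tproj_sq hξ.2, norm_neg, norm_eVec, real_inner_comm, inner_neg_eVec_sphNormal, hξ.1,
      zero_add, sin_sq, one_pow]
  have hlast : tproj n θ ξ (-eVec n) (Fin.last n) = sin θ ^ 2 := by
    rw [← inner_neg_eVec, ← hnorm, ← real_inner_self_eq_norm_sq, inner_tproj_left,
      tproj_eq_self (isTangent_tproj hξ.2)]
  refine ⟨(sin θ)⁻¹ • tproj n θ ξ (-eVec n), ?_, (isTangent_tproj hξ.2).smul _, ?_⟩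
  · rw [norm_smul, (sq_eq_sq₀ (norm_nonneg _) hsin.le).1 hnorm, norm_inv, norm_of_nonneg hsin.le,
      inv_mul_cancel₀ hsin.ne']
  · rw [PiLp.smul_apply, hlast, smul_eq_mul, sq, inv_mul_cancel_left₀ hsin.ne']

theorem cap_subset_closure_last_pos (hθ : θ ∈ Ioo 0 π) :
    cap n θ ⊆ closure {ξ ∈ cap n θ | 0 < ξ (Fin.last n)} := by
  intro ξ hξ
  rcases hξ.1.lt_or_eq with hpos | hzero
  · exact subset_closure ⟨hξ, hpos⟩
  obtain ⟨X, hX, hXt, hlast⟩ := exists_isTangent_last_eq_sin hθ ⟨hzero.symm, hξ.2⟩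
  have hlim := (hasDerivAt_greatCircle (cos θ • eVec n) (sphNormal n θ ξ) X 0).continuousAt.tendsto
  rw [greatCircle_zero, center_add_sphNormal] at hlim
  refine mem_closure_of_tendsto (hlim.mono_left (nhdsWithin_le_nhds (s := Ioi 0))) ?_
  filter_upwards [Ioo_mem_nhdsGT hθ.1] with t ht
  suffices h : 0 < greatCircle (cos θ • eVec n) (sphNormal n θ ξ) X t (Fin.last n) from
    ⟨⟨h.le, norm_sphNormal_greatCircle hξ.2 hX hXt t⟩, h⟩
  rw [last_greatCircle, ← hzero, hlast, zero_add, mul_comm (cos t), mul_comm (sin t), ← cos_sub]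
  exact sub_pos.2 (cos_lt_cos_of_nonneg_of_le_pi (sub_nonneg.2 ht.2.le) hθ.2.le
    (sub_lt_self θ ht.1))

variable {D D₁ D₂ : Euc n → ℝ}

theorem shess_smul_smul (c : ℝ) :
    shess n θ D ξ (c • X) (c • X) = c ^ 2 * shess n θ D ξ X X := by
  simp only [shess, map_smul, inner_smul_left, inner_smul_right, conj_trivial]
  ring

theorem continuous_sgrad (hD : ContDiff ℝ 1 D) : Continuous (sgrad n θ D) :=
  continuous_tproj_apply (contDiff_gradient (n := 0) (by simpa)).continuous

theorem continuous_shess_tproj (hD : ContDiff ℝ 2 D) (X : Euc n) :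
    Continuous fun ξ => shess n θ D ξ (tproj n θ ξ X) (tproj n θ ξ X) := by
  have hgrad : ContDiff ℝ 1 (gradient D) := contDiff_gradient (by simpa [one_add_one_eq_two])
  have hproj : Continuous fun ξ => tproj n θ ξ X := continuous_tproj_apply continuous_const
  exact (((hgrad.continuous_fderiv one_ne_zero).clm_apply hproj).inner hproj).sub
    ((hgrad.continuous.inner continuous_sphNormal).mul (hproj.inner hproj))

theorem comp_greatCircle_eventuallyEq (heq : EqOn D₁ D₂ (cap n θ)) (hξ : ξ ∈ cap n θ)
    (hpos : 0 < ξ (Fin.last n)) (hX : ‖X‖ = 1) (hXt : IsTangent n θ ξ X) :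
    (fun t => D₁ (greatCircle (cos θ • eVec n) (sphNormal n θ ξ) X t)) =ᶠ[𝓝 0]
      fun t => D₂ (greatCircle (cos θ • eVec n) (sphNormal n θ ξ) X t) := by
  have hcont : Continuous fun t : ℝ =>
      cos t * (ξ (Fin.last n) + cos θ) + sin t * X (Fin.last n) - cos θ := by fun_prop
  filter_upwards [hcont.continuousAt.eventually_const_lt (u := 0) (by simpa)] with t ht
  exact heq ⟨(last_greatCircle t).symm ▸ ht.le, norm_sphNormal_greatCircle hξ.2 hX hXt t⟩

theorem deriv_comp_greatCircle_eq_inner_gradient (hD : Differentiable ℝ D) :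
    deriv (fun t => D (greatCircle (cos θ • eVec n) (sphNormal n θ ξ) X t)) 0 =
      ⟪gradient D ξ, X⟫ := by
  simp [deriv_comp_greatCircle hD, greatCircle_zero, center_add_sphNormal]

theorem iteratedDeriv_two_comp_greatCircle_eq_shess (hD : ContDiff ℝ 2 D) (hX : ‖X‖ = 1) :
    iteratedDeriv 2 (fun t => D (greatCircle (cos θ • eVec n) (sphNormal n θ ξ) X t)) 0 =
      shess n θ D ξ X X := by
  rw [iteratedDeriv_two_comp_greatCircle_zero hD, center_add_sphNormal, shess,
    real_inner_self_eq_norm_sq, hX, one_pow, mul_one]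

theorem sgrad_eq_of_eqOn_cap_of_last_pos (hD₁ : Differentiable ℝ D₁) (hD₂ : Differentiable ℝ D₂)
    (heq : EqOn D₁ D₂ (cap n θ)) (hξ : ξ ∈ cap n θ) (hpos : 0 < ξ (Fin.last n)) :
    sgrad n θ D₁ ξ = sgrad n θ D₂ ξ := by
  refine ext_inner_right ℝ fun Y => ?_
  rw [sgrad, sgrad, inner_tproj_left, inner_tproj_left]
  rcases eq_or_ne (tproj n θ ξ Y) 0 with hY | hY
  · rw [hY, inner_zero_right, inner_zero_right]
  obtain ⟨c, X, hYX, hX, hXt⟩ := (isTangent_tproj hξ.2).exists_eq_smul_norm_eq_one hY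
  rw [hYX, inner_smul_right, inner_smul_right,
    ← deriv_comp_greatCircle_eq_inner_gradient (θ := θ) hD₁,
    ← deriv_comp_greatCircle_eq_inner_gradient (θ := θ) hD₂,
    (comp_greatCircle_eventuallyEq heq hξ hpos hX hXt).deriv_eq]

theorem shess_self_eq_of_eqOn_cap_of_last_pos (hD₁ : ContDiff ℝ 2 D₁) (hD₂ : ContDiff ℝ 2 D₂)
    (heq : EqOn D₁ D₂ (cap n θ)) (hξ : ξ ∈ cap n θ) (hpos : 0 < ξ (Fin.last n))
    (hX : IsTangent n θ ξ X) : shess n θ D₁ ξ X X = shess n θ D₂ ξ X X := by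
  rcases eq_or_ne X 0 with rfl | hX₀
  · simp [shess]
  obtain ⟨c, Y, rfl, hY, hYt⟩ := hX.exists_eq_smul_norm_eq_one hX₀
  rw [shess_smul_smul, shess_smul_smul, ← iteratedDeriv_two_comp_greatCircle_eq_shess hD₁ hY,
    ← iteratedDeriv_two_comp_greatCircle_eq_shess hD₂ hY,
    (comp_greatCircle_eventuallyEq heq hξ hpos hY hYt).iteratedDeriv_eq 2]

theorem sgrad_eqOn_of_eqOn_cap (hθ : θ ∈ Ioo 0 π) (hD₁ : ContDiff ℝ 1 D₁) (hD₂ : ContDiff ℝ 1 D₂)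
    (heq : EqOn D₁ D₂ (cap n θ)) : EqOn (sgrad n θ D₁) (sgrad n θ D₂) (cap n θ) := by
  have hinterior : EqOn (sgrad n θ D₁) (sgrad n θ D₂) {ξ ∈ cap n θ | 0 < ξ (Fin.last n)} :=
    fun ξ hξ => sgrad_eq_of_eqOn_cap_of_last_pos (hD₁.differentiable one_ne_zero)
      (hD₂.differentiable one_ne_zero) heq hξ.1 hξ.2
  exact (hinterior.closure (continuous_sgrad hD₁) (continuous_sgrad hD₂)).mono
    (cap_subset_closure_last_pos hθ)

theorem shess_self_eq_of_eqOn_cap (hθ : θ ∈ Ioo 0 π) (hD₁ : ContDiff ℝ 2 D₁)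
    (hD₂ : ContDiff ℝ 2 D₂) (heq : EqOn D₁ D₂ (cap n θ)) (hξ : ξ ∈ cap n θ)
    (hX : IsTangent n θ ξ X) : shess n θ D₁ ξ X X = shess n θ D₂ ξ X X := by
  have hinterior : EqOn (fun ξ => shess n θ D₁ ξ (tproj n θ ξ X) (tproj n θ ξ X))
      (fun ξ => shess n θ D₂ ξ (tproj n θ ξ X) (tproj n θ ξ X))
      {ξ ∈ cap n θ | 0 < ξ (Fin.last n)} := fun ξ hξ =>
    shess_self_eq_of_eqOn_cap_of_last_pos hD₁ hD₂ heq hξ.1 hξ.2 (isTangent_tproj hξ.1.2)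
  have h := hinterior.closure (continuous_shess_tproj hD₁ X) (continuous_shess_tproj hD₂ X)
    (cap_subset_closure_last_pos hθ hξ)
  simpa only [tproj_eq_self hX] using h

/-- The rotationally symmetric function on the cap with value `φ (cos r)` at distance `r` from the
top point, extended to the ambient space; there `ξ (Fin.last n) + cos θ = ⟪-eVec n, ν(ξ)⟫`. -/
def zonal (n : ℕ) (θ : ℝ) (φ : ℝ → ℝ) (ξ : Euc n) : ℝ := φ (ξ (Fin.last n) + cos θ)

variable {φ : ℝ → ℝ}

theorem zonal_eq_comp_inner (n : ℕ) (θ : ℝ) (φ : ℝ → ℝ) :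
    zonal n θ φ = fun ξ => φ (⟪-eVec n, ξ⟫ + cos θ) :=
  funext fun ξ => by rw [inner_neg_eVec, zonal]

theorem contDiff_zonal {k : WithTop ℕ∞} (hφ : ContDiff ℝ k φ) : ContDiff ℝ k (zonal n θ φ) := by
  rw [zonal_eq_comp_inner]
  exact hφ.comp ((contDiff_const.inner ℝ contDiff_id).add contDiff_const)

theorem gradient_zonal (hφ : Differentiable ℝ φ) :
    gradient (zonal n θ φ) ξ = deriv φ (ξ (Fin.last n) + cos θ) • -eVec n := by
  rw [zonal_eq_comp_inner, gradient_comp_inner_add_const hφ, inner_neg_eVec]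

theorem shess_zonal_self (hφ : ContDiff ℝ 2 φ) :
    shess n θ (zonal n θ φ) ξ X X =
      deriv (deriv φ) (ξ (Fin.last n) + cos θ) * X (Fin.last n) ^ 2 -
        deriv φ (ξ (Fin.last n) + cos θ) * (ξ (Fin.last n) + cos θ) * ⟪X, X⟫ := by
  rw [shess, gradient_zonal (hφ.differentiable two_ne_zero), zonal_eq_comp_inner,
    fderiv_gradient_comp_inner_add_const hφ, real_inner_smul_left, real_inner_smul_left,
    inner_neg_eVec_sphNormal, inner_neg_eVec, inner_neg_eVec, mul_assoc (deriv (deriv φ) _), ← sq]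

theorem conormal_eq_smul_tproj (hθ : θ ∈ Ioo 0 π) (hξ : ξ ∈ capBdry n θ) :
    conormal n θ ξ = -(sin θ)⁻¹ • tproj n θ ξ (-eVec n) := by
  have hsin := (sin_pos_of_mem_Ioo hθ).ne'
  have hinner : ⟪sphNormal n θ ξ, -eVec n⟫ = cos θ := by
    rw [real_inner_comm, inner_neg_eVec_sphNormal, hξ.1, zero_add]
  have hsq : sin θ = (sin θ)⁻¹ * (1 - cos θ ^ 2) := by
    rw [← sin_sq]
    field_simp
  rw [tproj_apply, hinner, sphNormal, conormal, cot_eq_cos_div_sin]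
  nth_rewrite 2 [hsq]
  module

theorem IsCapProfile.zonal_eqOn_dCap (hprof : IsCapProfile θ φ) (hθ : θ ∈ Icc 0 π) :
    EqOn (zonal n θ φ) (dCap n θ) (cap n θ) := fun ξ hξ => by
  rw [zonal, ← cos_distToTop hξ]
  exact hprof (distToTop_mem_Icc hθ hξ)

theorem IsCapProfile.sgrad_zonal_eq_conormal (hprof : IsCapProfile θ φ) (hθ : θ ∈ Ioo 0 π)
    (hφ : Differentiable ℝ φ) (hξ : ξ ∈ capBdry n θ) :
    sgrad n θ (zonal n θ φ) ξ = conormal n θ ξ := by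
  have hderiv : deriv φ (cos θ) = -(sin θ)⁻¹ := by
    have h := hprof.neg_deriv_cos_mul_sin hθ.1 hφ ⟨hθ.1.le, le_rfl⟩
    rw [div_self hθ.1.ne'] at h
    rw [← neg_eq_iff_eq_neg, eq_inv_of_mul_eq_one_left h]
  rw [sgrad, gradient_zonal hφ, map_smul, hξ.1, zero_add, hderiv, conormal_eq_smul_tproj hθ hξ]

theorem IsCapProfile.cot_mul_inner_le_shess_zonal (hprof : IsCapProfile θ φ) (hθ : θ ∈ Ioo 0 π)
    (hφ : ContDiff ℝ 2 φ) (hξ : ξ ∈ cap n θ) :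
    cot θ * ⟪X, X⟫ ≤ shess n θ (zonal n θ φ) ξ X X := by
  have hr := distToTop_mem_Icc (Ioo_subset_Icc_self hθ) hξ
  rw [shess_zonal_self hφ, ← cos_distToTop hξ]
  have hradial := mul_nonneg (hprof.deriv_deriv_cos_nonneg hθ hφ hr)
    (sq_nonneg (X (Fin.last n)))
  have hround := mul_le_mul_of_nonneg_right
    (hprof.cot_le_neg_deriv_cos_mul_cos hθ hφ hr) (real_inner_self_nonneg (x := X))
  linarith

end Cap

theorem distance_function_properties_general (n : ℕ) (θ : ℝ) (hθ : θ ∈ Ioo 0 π) :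
    (∃ D : Euc n → ℝ, ContDiff ℝ ∞ D ∧ EqOn D (dCap n θ) (cap n θ)) ∧
    (∀ ξ ∈ capBdry n θ, dCap n θ ξ = θ / 2) ∧
    (∀ D : Euc n → ℝ, ContDiff ℝ 2 D → EqOn D (dCap n θ) (cap n θ) →
      (∀ ξ ∈ capBdry n θ, sgrad n θ D ξ = conormal n θ ξ) ∧
      (∀ ξ ∈ cap n θ, ∀ X : Euc n, IsTangent n θ ξ X →
        cot θ * ⟪X, X⟫ ≤ shess n θ D ξ X X)) := by
  have hθ' : θ ∈ Icc 0 π := Ioo_subset_Icc_self hθ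
  obtain ⟨φ, hφ, hprof⟩ := exists_contDiff_isCapProfile (Ioo_subset_Ico_self hθ)
  have hφ₂ : ContDiff ℝ 2 φ := contDiff_infty.1 hφ 2
  have hzonal : EqOn (zonal n θ φ) (dCap n θ) (cap n θ) := hprof.zonal_eqOn_dCap hθ'
  have hzonal₂ : ContDiff ℝ 2 (zonal n θ φ) := contDiff_zonal hφ₂
  refine ⟨⟨zonal n θ φ, contDiff_zonal hφ, hzonal⟩, fun ξ hξ => ?_, fun D hD heq =>
    ⟨fun ξ hξ => ?_, fun ξ hξ X hX => ?_⟩⟩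
  · rw [dCap, distToTop_eq_of_mem_capBdry hθ' hξ, sq, mul_div_mul_right _ _ hθ.1.ne']
  · rw [sgrad_eqOn_of_eqOn_cap hθ (hD.of_le one_le_two) (hzonal₂.of_le one_le_two)
      (heq.trans hzonal.symm) (capBdry_subset_cap hξ)]
    exact hprof.sgrad_zonal_eq_conormal hθ (hφ₂.differentiable two_ne_zero) hξ
  · rw [shess_self_eq_of_eqOn_cap hθ hD hzonal₂ (heq.trans hzonal.symm) hξ hX]
    exact hprof.cot_mul_inner_le_shess_zonal hθ hφ₂ hξ

/-- properties of `d = d_N²/(2θ)`, where `d_N` is the geodesic distance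
on `C_θ` to the top point `N = (0,…,0,1-cos θ)`: `d` is smooth on `C_θ` (it agrees on
`C_θ` with an ambient smooth function), `d = θ/2` and `∇d = μ` on `∂C_θ`, and
`∇²d ≥ min{1/θ, cot θ}·σ` on `C_θ`.  (The gradient and Hessian statements are expressed
via an arbitrary `C²` ambient representative `D` of `d`; for tangential arguments they do
not depend on the choice of representative.) -/
theorem distance_function_properties
    (n : ℕ) (hn : 1 ≤ n) (θ : ℝ) (hθ : θ ∈ Set.Ioo 0 (π / 2)) :
    (∃ D : Euc n → ℝ, ContDiff ℝ (⊤ : ℕ∞) D ∧ Set.EqOn D (dCap n θ) (cap n θ)) ∧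
    (∀ ξ ∈ capBdry n θ, dCap n θ ξ = θ / 2) ∧
    (∀ D : Euc n → ℝ, ContDiff ℝ 2 D → Set.EqOn D (dCap n θ) (cap n θ) →
      (∀ ξ ∈ capBdry n θ, sgrad n θ D ξ = conormal n θ ξ) ∧
      (∀ ξ ∈ cap n θ, ∀ X : Euc n, IsTangent n θ ξ X →
        min (1 / θ) (Real.cot θ) * ⟪X, X⟫ ≤ shess n θ D ξ X X)) := by
  have hθπ : θ ∈ Ioo 0 π := ⟨hθ.1, hθ.2.trans (half_lt_self pi_pos)⟩
  obtain ⟨hsmooth, hvalue, hderiv⟩ := distance_function_properties_general n θ hθπ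
  refine ⟨hsmooth, hvalue, fun D hD heq => (hderiv D hD heq).imp_right fun h ξ hξ X hX => ?_⟩
  exact (mul_le_mul_of_nonneg_right (min_le_right _ _) real_inner_self_nonneg).trans (h ξ hξ X hX)
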